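/- Let m and k be positive integers such that gcd(k, m) = 1 and m is odd, and let π be the Gold permutation of F_{2^m} defined by π(x) = x^{2^k + 1}. Then π satisfies Property (P). -/

import Mathlib

/-- The absolute trace map of `F_{2^m}`. -/
noncomputable def Tr (m : ℕ) (x : GaloisField 2 m) : ZMod 2 :=
  Algebra.trace (ZMod 2) (GaloisField 2 m) x

/-- Property (P) for a permutation `π` of `F_{2^m}`. -/
def PropertyP (m : ℕ) (π : GaloisField 2 m → GaloisField 2 m) : Prop :=
  ∀ a₁ a₂ b₁ b₂ : GaloisField 2 m,
    ((∀ x, π x + π (x + a₂) + π (x + b₂) + π (x + a₂ + b₂) = 0) ∧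
     (∀ x, Tr m (a₁ * π (x + a₂) + b₁ * π (x + b₂) + (a₁ + b₁) * π (x + a₂ + b₂)) = 0)) ↔
    ((a₁ = 0 ∧ a₂ = 0) ∨ (b₁ = 0 ∧ b₂ = 0) ∨ (a₁ = b₁ ∧ a₂ = b₂) ∨ (a₂ = 0 ∧ b₂ = 0))

lemma aux_frob (m : ℕ) (x y : GaloisField 2 m) (k : ℕ) :
    (x + y) ^ (2 ^ k) = x ^ (2 ^ k) + y ^ (2 ^ k) := add_pow_char_pow ..

lemma aux_fix (m k : ℕ) (hm : 0 < m) (hgcd : Nat.gcd k m = 1) (c : GaloisField 2 m)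
    (h : c ^ (2 ^ k) = c) : c = 0 ∨ c = 1 := by
  have h1 : Function.IsPeriodicPt (frobenius (GaloisField 2 m) 2) k c := by
    rw [Function.IsPeriodicPt, Function.IsFixedPt, iterate_frobenius, h]
  have h2 : Function.IsPeriodicPt (frobenius (GaloisField 2 m) 2) m c := by
    rw [Function.IsPeriodicPt, Function.IsFixedPt, iterate_frobenius]
    have : Finite (GaloisField 2 m) := inferInstance
    have := Fintype.ofFinite (GaloisField 2 m)
    have h3 := FiniteField.pow_card c
    rwa [← Nat.card_eq_fintype_card, GaloisField.card 2 m hm.ne'] at h3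
  have h3 := h1.gcd h2
  rw [hgcd, Function.IsPeriodicPt, Function.IsFixedPt, iterate_frobenius] at h3
  have : c * (c - 1) = 0 := by linear_combination h3
  rcases mul_eq_zero.1 this with h | h
  · exact Or.inl h
  · exact Or.inr (sub_eq_zero.1 h)

lemma aux_tr (m k : ℕ) (c : GaloisField 2 m) : Tr m (c ^ (2 ^ k)) = Tr m c := by
  induction k with
  | zero => simp
  | succ k ih =>
    rw [pow_succ, pow_mul, ← ih]
    have := Algebra.trace_eq_of_algEquiv
      (FiniteField.frobeniusAlgEquivOfAlgebraic (ZMod 2) (GaloisField 2 m)) (c ^ 2 ^ k)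
    simpa [Tr] using this

lemma aux_add (m : ℕ) (x y : GaloisField 2 m) : Tr m (x + y) = Tr m x + Tr m y := by
  simp [Tr]

lemma aux_nondeg (m : ℕ) (c : GaloisField 2 m) (h : ∀ y, Tr m (c * y) = 0) : c = 0 := by
  refine (traceForm_nondegenerate (ZMod 2) (GaloisField 2 m)).1 c fun y => ?_
  rw [Algebra.traceForm_apply]
  exact h y

lemma aux_main (m k : ℕ) (hm : 0 < m) (hgcd : Nat.gcd k m = 1) (hodd : Odd m)
    (a b : GaloisField 2 m) (hb : b ≠ 0)
    (h : ∀ x, Tr m (a * (x ^ (2 ^ k + 1) + (x + b) ^ (2 ^ k + 1))) = 0) : a = 0 := by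
  have two : (2 : GaloisField 2 m) = 0 := CharTwo.two_eq_zero
  set c := a * b ^ (2 ^ k + 1) with hc
  have h0 : Tr m c = 0 := by simpa using h 0
  have h1 : ∀ y, Tr m (c * y ^ 2 ^ k) + Tr m (c * y) = 0 := by
    intro y
    have := h (b * y)
    have e : a * ((b * y) ^ (2 ^ k + 1) + (b * y + b) ^ (2 ^ k + 1)) =
        c * y ^ 2 ^ k + c * y + c := by
      rw [pow_succ, pow_succ, aux_frob, hc]
      simp only [mul_pow, pow_succ]
      linear_combination (a * b ^ 2 ^ k * y ^ 2 ^ k * b * y) * two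
    rw [e, aux_add, aux_add, h0, add_zero] at this
    exact this
  have hfix : c ^ 2 ^ k = c := by
    have : c + c ^ 2 ^ k = 0 := by
      apply aux_nondeg
      intro z
      have hs : Function.Surjective (fun y : GaloisField 2 m => y ^ 2 ^ k) := by
        apply Finite.surjective_of_injective
        intro x y hxy
        exact iterateFrobenius_inj (GaloisField 2 m) 2 k hxy
      obtain ⟨y, rfl⟩ := hs z
      simp only
      rw [add_mul, aux_add, ← mul_pow, aux_tr, h1]
    linear_combination this - c * two
  rcases aux_fix m k hm hgcd c hfix with h | h
  · simpa [hc, hb] using h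
  · exfalso
    rw [h] at h0
    have := Algebra.trace_algebraMap (S := GaloisField 2 m) (1 : ZMod 2)
    rw [map_one, GaloisField.finrank 2 hm.ne'] at this
    unfold Tr at h0
    rw [h0, nsmul_eq_mul, mul_one, eq_comm, ZMod.natCast_eq_zero_iff] at this
    exact (Nat.not_even_iff_odd.2 hodd) (even_iff_two_dvd.2 this)

/-- Lemma 3.11: for `gcd(k,m) = 1` and `m` odd, the Gold permutation `π(x) = x^{2^k+1}`
of `F_{2^m}` satisfies Property (P). -/
theorem gold_satisfies_propertyP
    (m k : ℕ) (hm : 0 < m) (hk : 0 < k) (hgcd : Nat.gcd k m = 1) (hodd : Odd m)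
    (π : GaloisField 2 m → GaloisField 2 m) (hπ : ∀ x, π x = x ^ (2 ^ k + 1)) :
    PropertyP m π := by
  have two : (2 : GaloisField 2 m) = 0 := CharTwo.two_eq_zero
  intro a₁ a₂ b₁ b₂
  have hadd : ∀ x : GaloisField 2 m, x + x = 0 := CharTwo.add_self_eq_zero
  have T0 : Tr m 0 = 0 := by simp [Tr]
  constructor
  · rintro ⟨hi, hii⟩
    have hcase : a₂ = 0 ∨ b₂ = 0 ∨ a₂ = b₂ := by
      by_cases ha : a₂ = 0
      · exact Or.inl ha
      have h0 := hi 0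
      simp only [hπ, pow_succ, aux_frob, zero_add] at h0
      have e : a₂ ^ 2 ^ k * b₂ + b₂ ^ 2 ^ k * a₂ = 0 := by
        rw [zero_pow (by positivity)] at h0
        linear_combination h0 - (a₂ ^ 2 ^ k * a₂ + b₂ ^ 2 ^ k * b₂) * two
      have f : (b₂ / a₂) ^ 2 ^ k = b₂ / a₂ := by
        rw [div_pow]
        field_simp
        linear_combination e - (a₂ ^ 2 ^ k * b₂) * two
      rcases aux_fix m k hm hgcd _ f with h | h
      · right; left
        simpa [ha] using h
      · right; right
        field_simp at h
        exact h.symm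
    rcases hcase with rfl | rfl | rfl
    · by_cases hb : b₂ = 0
      · simp [hb]
      left
      refine ⟨aux_main m k hm hgcd hodd a₁ b₂ hb fun x => ?_, rfl⟩
      rw [← hii x]
      congr 1
      simp only [hπ, add_zero]
      linear_combination (-b₁ * (x + b₂) ^ (2 ^ k + 1)) * two
    · by_cases ha : a₂ = 0
      · simp [ha]
      right; left
      refine ⟨aux_main m k hm hgcd hodd b₁ a₂ ha fun x => ?_, rfl⟩
      rw [← hii x]
      congr 1
      simp only [hπ, add_zero]
      linear_combination (-a₁ * (x + a₂) ^ (2 ^ k + 1)) * two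
    · by_cases ha : a₂ = 0
      · simp [ha]
      right; right; left
      refine ⟨?_, rfl⟩
      have : a₁ + b₁ = 0 := aux_main m k hm hgcd hodd (a₁ + b₁) a₂ ha fun x => by
        rw [← hii x]
        congr 1
        rw [add_assoc x a₂ a₂, hadd, add_zero]
        simp only [hπ]
        ring
      linear_combination this - b₁ * two
  · rintro (⟨rfl, rfl⟩ | ⟨rfl, rfl⟩ | ⟨rfl, rfl⟩ | ⟨rfl, rfl⟩)
    · refine ⟨fun x => ?_, fun x => ?_⟩
      · simp only [add_zero]; linear_combination (π x + π (x + b₂)) * two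
      · simp [hadd, T0]
    · refine ⟨fun x => ?_, fun x => ?_⟩
      · simp only [add_zero]; linear_combination (π x + π (x + a₂)) * two
      · simp [hadd, T0]
    · refine ⟨fun x => ?_, fun x => ?_⟩
      · rw [add_assoc x, hadd, add_zero]; linear_combination (π x + π (x + a₂)) * two
      · simp [hadd, T0]
    · refine ⟨fun x => ?_, fun x => ?_⟩
      · simp only [add_zero]; linear_combination (2 * π x) * two
      · simp only [add_zero]; rw [← add_mul, hadd, T0]
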